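/- Let B ≥ 1, d ≥ 1 and let U¹, V¹, U², V² be d×B real matrices each of whose columns has Euclidean norm at most 1. For i = 1, 2 let G_i = (1/B)·( −2·I_B + P_{(Uⁱ)ᵀVⁱ} + Q_{(Uⁱ)ᵀVⁱ} ) be the gradient of L^M at (Uⁱ)ᵀVⁱ. Then √( ‖V¹·G₁ᵀ − V²·G₂ᵀ‖_F² + ‖U¹·G₁ − U²·G₂‖_F² ) ≤ ρ₀ · √( ‖U¹ − U²‖_F² + ‖V¹ − V²‖_F² ), where ρ₀ = 2·√(2/B) + 4e²/B and e = exp(1); i.e., the gradient of the mini-batch contrastive loss (U,V) ↦ L^M(UᵀV) is ρ₀-Lipschitz on configurations whose columns lie in the closed unit ball. -/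

import Mathlib

open scoped BigOperators
open Finset Matrix

/-- Row-softmax matrix `(P_X)_{ij} = exp(X_{ij}) / Σ_k exp(X_{ik})`. -/
noncomputable def Pmat {B : ℕ} (X : Matrix (Fin B) (Fin B) ℝ) : Matrix (Fin B) (Fin B) ℝ :=
  Matrix.of fun i j => Real.exp (X i j) / ∑ k, Real.exp (X i k)

/-- Column-softmax matrix `(Q_X)_{ij} = exp(X_{ij}) / Σ_k exp(X_{kj})`. -/
noncomputable def Qmat {B : ℕ} (X : Matrix (Fin B) (Fin B) ℝ) : Matrix (Fin B) (Fin B) ℝ :=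
  Matrix.of fun i j => Real.exp (X i j) / ∑ k, Real.exp (X k j)

/-- The gradient of `L^M` at `X`: `(1/B)·(−2·I + P_X + Q_X)`. -/
noncomputable def gradLM {B : ℕ} (X : Matrix (Fin B) (Fin B) ℝ) : Matrix (Fin B) (Fin B) ℝ :=
  (1/(B:ℝ)) • ((-2 : ℝ) • (1 : Matrix (Fin B) (Fin B) ℝ) + Pmat X + Qmat X)

/-- The Frobenius norm of a matrix. -/
noncomputable def frobNorm {m n : ℕ} (M : Matrix (Fin m) (Fin n) ℝ) : ℝ :=
  Real.sqrt (∑ i, ∑ j, (M i j)^2)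

/-!
On a row, softmax has the Jacobian `diag p - p pᵀ`, which sends `h` to `pⱼ (hⱼ - ⟨p, h⟩)`.
A variance is at most the second moment, so this Jacobian has operator norm at most `maxⱼ pⱼ`.
Entries of `UᵀV` lie in `[-r², r²]` when the columns of `U` and `V` lie in the ball of radius `r`,
hence `pⱼ ≤ exp (2r²) / B`, and the mean value inequality makes `X ↦ P_X` and `X ↦ Q_X` Lipschitz in
the Frobenius norm. Moreover `P_X - I` and `Q_X - I` have Frobenius norm at most `√(2B)`, since two
points of the simplex are at distance at most `√2`. The products `V Gᵀ` and `U G` are then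
compared by changing one factor at a time.
-/

open WithLp
open scoped Matrix.Norms.Frobenius

section Softmax

variable {ι : Type*} [Fintype ι]

/-- The softmax of a vector, the common form of the rows of `Pmat` and the columns of `Qmat`.
It is a plain function `ι → ℝ`; Euclidean norms are taken through `toLp 2`. -/
noncomputable def softmax (x : ι → ℝ) (j : ι) : ℝ :=
  Real.exp (x j) / ∑ k, Real.exp (x k)

lemma sum_exp_pos [Nonempty ι] (x : ι → ℝ) : 0 < ∑ k, Real.exp (x k) :=
  sum_pos (fun _ _ => Real.exp_pos _) univ_nonempty

lemma softmax_mem_stdSimplex [Nonempty ι] (x : ι → ℝ) : softmax x ∈ stdSimplex ℝ ι := by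
  refine ⟨fun j => div_nonneg (Real.exp_pos _).le (sum_exp_pos x).le, ?_⟩
  simp only [softmax]
  rw [← sum_div, div_self (sum_exp_pos x).ne']

lemma softmax_le_exp_sub_div_card {a b : ℝ} {x : ι → ℝ} (hx : ∀ j, x j ∈ Set.Icc a b) (j : ι) :
    softmax x j ≤ Real.exp (b - a) / Fintype.card ι := by
  have : Nonempty ι := ⟨j⟩
  have hsum : Fintype.card ι * Real.exp a ≤ ∑ k, Real.exp (x k) := by
    simpa using card_nsmul_le_sum univ _ _ fun k _ => Real.exp_le_exp.2 (hx k).1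
  calc softmax x j ≤ Real.exp b / (Fintype.card ι * Real.exp a) := by
        unfold softmax
        gcongr
        exact (hx j).2
    _ = Real.exp (b - a) / Fintype.card ι := by rw [Real.exp_sub, div_div, mul_comm]

lemma hasDerivAt_softmax_comp {z : ℝ → ι → ℝ} {z' : ι → ℝ} {t : ℝ} (hz : HasDerivAt z z' t) :
    HasDerivAt (fun s => softmax (z s))
      (fun j => softmax (z t) j * (z' j - ∑ k, softmax (z t) k * z' k)) t := by
  refine hasDerivAt_pi.2 fun j => ?_
  have : Nonempty ι := ⟨j⟩
  have hexp (k : ι) : HasDerivAt (fun s => Real.exp (z s k)) (Real.exp (z t k) * z' k) t :=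
    (hasDerivAt_pi.1 hz k).exp
  have hquot := (hexp j).fun_div (HasDerivAt.fun_sum fun k _ => hexp k) (sum_exp_pos (z t)).ne'
  refine hquot.congr_deriv ?_
  have hmean : ∑ k, softmax (z t) k * z' k
      = (∑ k, Real.exp (z t k) * z' k) / ∑ k, Real.exp (z t k) := by
    simp only [softmax, sum_div, div_mul_eq_mul_div]
  have hne := (sum_exp_pos (z t)).ne'
  rw [hmean, softmax]
  field_simp

lemma sum_mul_sub_mean_sq_le {p : ι → ℝ} (hp : p ∈ stdSimplex ℝ ι) (h : ι → ℝ) :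
    ∑ j, p j * (h j - ∑ k, p k * h k) ^ 2 ≤ ∑ j, p j * h j ^ 2 := by
  set μ := ∑ k, p k * h k
  have hvar : ∑ j, p j * (h j - μ) ^ 2 = ∑ j, p j * h j ^ 2 - μ ^ 2 :=
    calc ∑ j, p j * (h j - μ) ^ 2
        = ∑ j, p j * h j ^ 2 - 2 * μ * ∑ j, p j * h j + μ ^ 2 * ∑ j, p j := by
          simp only [mul_sum, ← sum_sub_distrib, ← sum_add_distrib]
          exact sum_congr rfl fun j _ => by ring
      _ = ∑ j, p j * h j ^ 2 - μ ^ 2 := by rw [hp.2]; ring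
  linarith [sq_nonneg μ]

lemma norm_mul_sub_mean_le {p : ι → ℝ} (hp : p ∈ stdSimplex ℝ ι) {K : ℝ} (hK : ∀ j, p j ≤ K)
    (h : ι → ℝ) :
    ‖toLp 2 fun j => p j * (h j - ∑ k, p k * h k)‖ ≤ K * ‖toLp 2 h‖ := by
  obtain ⟨i, -, -⟩ := exists_ne_zero_of_sum_ne_zero (hp.2.trans_ne one_ne_zero)
  have hK₀ : 0 ≤ K := (hp.1 i).trans (hK i)
  refine (sq_le_sq₀ (norm_nonneg _) (by positivity)).1 ?_
  rw [mul_pow, EuclideanSpace.real_norm_sq_eq, EuclideanSpace.real_norm_sq_eq]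
  calc ∑ j, (p j * (h j - ∑ k, p k * h k)) ^ 2
      = ∑ j, p j * (p j * (h j - ∑ k, p k * h k) ^ 2) := sum_congr rfl fun j _ => by ring
    _ ≤ ∑ j, K * (p j * (h j - ∑ k, p k * h k) ^ 2) := by
        gcongr with j
        · exact mul_nonneg (hp.1 j) (sq_nonneg _)
        · exact hK j
    _ ≤ K * ∑ j, p j * h j ^ 2 := by
        rw [← mul_sum]
        exact mul_le_mul_of_nonneg_left (sum_mul_sub_mean_sq_le hp h) hK₀
    _ ≤ K * ∑ j, K * h j ^ 2 := by
        gcongr with j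
        exact hK j
    _ = K ^ 2 * ∑ j, h j ^ 2 := by rw [← mul_sum]; ring

lemma norm_softmax_sub_softmax_le [Nonempty ι] {a b : ℝ} {x y : ι → ℝ}
    (hx : ∀ j, x j ∈ Set.Icc a b) (hy : ∀ j, y j ∈ Set.Icc a b) :
    ‖toLp 2 (softmax x - softmax y)‖
      ≤ Real.exp (b - a) / Fintype.card ι * ‖toLp 2 (x - y)‖ := by
  let z : ℝ → ι → ℝ := fun t => y + t • (x - y)
  have hz (t : ℝ) : HasDerivAt z (x - y) t :=
    (((hasDerivAt_id t).smul_const (x - y)).const_add y).congr_deriv (one_smul ℝ _)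
  have hz_mem (t : ℝ) (ht : t ∈ Set.Icc 0 1) (j : ι) : z t j ∈ Set.Icc a b :=
    (convex_Icc a b).add_smul_sub_mem (hy j) (hx j) ht
  have hmvt := norm_image_sub_le_of_norm_deriv_le_segment_01'
    (f := fun t => toLp 2 (softmax (z t)))
    (fun t _ => ((PiLp.hasFDerivAt_toLp (𝕜 := ℝ) 2 (softmax (z t))).comp_hasDerivAt t
      (hasDerivAt_softmax_comp (hz t))).hasDerivWithinAt)
    (fun t ht => norm_mul_sub_mean_le (softmax_mem_stdSimplex (z t))
      (softmax_le_exp_sub_div_card (hz_mem t (Set.Ico_subset_Icc_self ht))) (x - y))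
  simpa [z] using hmvt

end Softmax

lemma norm_sub_le_sqrt_two_of_mem_stdSimplex {ι : Type*} [Fintype ι] {p q : ι → ℝ}
    (hp : p ∈ stdSimplex ℝ ι) (hq : q ∈ stdSimplex ℝ ι) : ‖toLp 2 (p - q)‖ ≤ √2 := by
  refine Real.le_sqrt_of_sq_le ?_
  rw [EuclideanSpace.real_norm_sq_eq]
  calc ∑ j, (p j - q j) ^ 2 ≤ ∑ j, (p j + q j) := by
        gcongr with j
        obtain ⟨hp₀, hp₁⟩ := mem_Icc_of_mem_stdSimplex hp j
        obtain ⟨hq₀, hq₁⟩ := mem_Icc_of_mem_stdSimplex hq j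
        nlinarith [mul_nonneg hp₀ hq₀]
    _ = 2 := by rw [sum_add_distrib, hp.2, hq.2, one_add_one_eq_two]

lemma frobNorm_eq_norm {m n : ℕ} (M : Matrix (Fin m) (Fin n) ℝ) : frobNorm M = ‖M‖ := by
  rw [frobenius_norm_def, frobNorm, Real.sqrt_eq_rpow]
  simp

lemma norm_toLp_col {m n : Type*} [Fintype m] (A : Matrix m n ℝ) (j : n) :
    ‖toLp 2 (A.col j)‖ = √(∑ i, A i j ^ 2) := by
  simp [EuclideanSpace.norm_eq]

section Frobenius

variable {l m n : Type*} [Fintype l] [Fintype m] [Fintype n]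
variable {α : Type*} [SeminormedAddCommGroup α] {𝕜 : Type*} [RCLike 𝕜]

lemma frobenius_norm_sq_eq_sum_row (A : Matrix m n α) : ‖A‖ ^ 2 = ∑ i, ‖toLp 2 (A i)‖ ^ 2 := by
  rw [frobenius_norm_def, ← Real.sqrt_eq_rpow, Real.sq_sqrt (by positivity)]
  simp [PiLp.norm_sq_eq_of_L2]

lemma frobenius_norm_le_mul_of_row_le {c : ℝ} (hc : 0 ≤ c) {A : Matrix m n α} {C : Matrix m l α}
    (h : ∀ i, ‖toLp 2 (A i)‖ ≤ c * ‖toLp 2 (C i)‖) : ‖A‖ ≤ c * ‖C‖ := by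
  refine (sq_le_sq₀ (norm_nonneg _) (by positivity)).1 ?_
  rw [mul_pow, frobenius_norm_sq_eq_sum_row, frobenius_norm_sq_eq_sum_row, mul_sum]
  gcongr with i
  simpa only [mul_pow] using pow_le_pow_left₀ (norm_nonneg _) (h i) 2

lemma frobenius_norm_le_of_row_le {c : ℝ} {A : Matrix m n α} (h : ∀ i, ‖toLp 2 (A i)‖ ≤ c) :
    ‖A‖ ≤ √(Fintype.card m) * c := by
  cases isEmpty_or_nonempty m with
  | inl _ => simp [Subsingleton.elim A 0]
  | inr hm =>
    have hc : 0 ≤ c := (norm_nonneg _).trans (h hm.some)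
    refine (sq_le_sq₀ (norm_nonneg _) (by positivity)).1 ?_
    rw [mul_pow, Real.sq_sqrt (Nat.cast_nonneg _), frobenius_norm_sq_eq_sum_row]
    simpa using sum_le_card_nsmul univ _ _ fun i _ => pow_le_pow_left₀ (norm_nonneg _) (h i) 2

lemma frobenius_norm_le_of_col_le {c : ℝ} {A : Matrix m n α} (h : ∀ j, ‖toLp 2 (A.col j)‖ ≤ c) :
    ‖A‖ ≤ √(Fintype.card n) * c := by
  rw [← frobenius_norm_transpose]
  exact frobenius_norm_le_of_row_le h

lemma frobenius_norm_mul_sub_mul_le (A₁ A₂ : Matrix l m 𝕜) (C₁ C₂ : Matrix m n 𝕜) :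
    ‖A₁ * C₁ - A₂ * C₂‖ ≤ ‖A₁ - A₂‖ * ‖C₁‖ + ‖A₂‖ * ‖C₁ - C₂‖ :=
  calc ‖A₁ * C₁ - A₂ * C₂‖ = ‖(A₁ - A₂) * C₁ + A₂ * (C₁ - C₂)‖ := by
        rw [Matrix.sub_mul, Matrix.mul_sub, sub_add_sub_cancel]
    _ ≤ ‖(A₁ - A₂) * C₁‖ + ‖A₂ * (C₁ - C₂)‖ := norm_add_le _ _
    _ ≤ ‖A₁ - A₂‖ * ‖C₁‖ + ‖A₂‖ * ‖C₁ - C₂‖ :=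
        add_le_add (frobenius_norm_mul _ _) (frobenius_norm_mul _ _)

lemma frobenius_norm_mul_sub_mul_le_of_le {c g δ : ℝ} {A₁ A₂ : Matrix l m 𝕜}
    {C₁ C₂ : Matrix m n 𝕜} (hA₂ : ‖A₂‖ ≤ c) (hC₁ : ‖C₁‖ ≤ g) (hC : c * ‖C₁ - C₂‖ ≤ δ) :
    ‖A₁ * C₁ - A₂ * C₂‖ ≤ ‖A₁ - A₂‖ * g + δ :=
  calc ‖A₁ * C₁ - A₂ * C₂‖ ≤ ‖A₁ - A₂‖ * ‖C₁‖ + ‖A₂‖ * ‖C₁ - C₂‖ :=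
        frobenius_norm_mul_sub_mul_le A₁ A₂ C₁ C₂
    _ ≤ ‖A₁ - A₂‖ * g + c * ‖C₁ - C₂‖ := by gcongr
    _ ≤ ‖A₁ - A₂‖ * g + δ := by gcongr

lemma frobenius_norm_transpose_mul_sub_transpose_mul_le_of_col_le {r : ℝ}
    {U₁ V₁ U₂ V₂ : Matrix m n ℝ} (hV₁ : ∀ j, ‖toLp 2 (V₁.col j)‖ ≤ r)
    (hU₂ : ∀ j, ‖toLp 2 (U₂.col j)‖ ≤ r) :
    ‖U₁ᵀ * V₁ - U₂ᵀ * V₂‖ ≤ √(Fintype.card n) * r * (‖U₁ - U₂‖ + ‖V₁ - V₂‖) :=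
  calc ‖U₁ᵀ * V₁ - U₂ᵀ * V₂‖ ≤ ‖U₁ᵀ - U₂ᵀ‖ * ‖V₁‖ + ‖U₂ᵀ‖ * ‖V₁ - V₂‖ :=
        frobenius_norm_mul_sub_mul_le _ _ _ _
    _ = ‖U₁ - U₂‖ * ‖V₁‖ + ‖U₂‖ * ‖V₁ - V₂‖ := by
        rw [← transpose_sub, frobenius_norm_transpose, frobenius_norm_transpose]
    _ ≤ ‖U₁ - U₂‖ * (√(Fintype.card n) * r) + √(Fintype.card n) * r * ‖V₁ - V₂‖ := by
        gcongr
        · exact frobenius_norm_le_of_col_le hV₁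
        · exact frobenius_norm_le_of_col_le hU₂
    _ = √(Fintype.card n) * r * (‖U₁ - U₂‖ + ‖V₁ - V₂‖) := by ring

end Frobenius

lemma abs_transpose_mul_apply_le {l m n : Type*} [Fintype l] (U : Matrix l m ℝ) (V : Matrix l n ℝ)
    (i : m) (j : n) :
    |(Uᵀ * V) i j| ≤ ‖toLp 2 (U.col i)‖ * ‖toLp 2 (V.col j)‖ := by
  have hinner : (Uᵀ * V) i j = inner ℝ (toLp 2 (U.col i)) (toLp 2 (V.col j)) := by
    simp [Matrix.mul_apply, PiLp.inner_apply, mul_comm]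
  rw [hinner]
  exact abs_real_inner_le_norm _ _

lemma transpose_mul_apply_mem_Icc {l m n : Type*} [Fintype l] {r : ℝ} {U : Matrix l m ℝ}
    {V : Matrix l n ℝ} (hU : ∀ i, ‖toLp 2 (U.col i)‖ ≤ r) (hV : ∀ j, ‖toLp 2 (V.col j)‖ ≤ r)
    (i : m) (j : n) :
    (Uᵀ * V) i j ∈ Set.Icc (-r ^ 2) (r ^ 2) := by
  refine abs_le.1 ((abs_transpose_mul_apply_le U V i j).trans ?_)
  rw [sq]
  exact mul_le_mul (hU i) (hV j) (norm_nonneg _) ((norm_nonneg _).trans (hU i))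

section GradLM

variable {B : ℕ}

lemma norm_Pmat_sub_one_le (X : Matrix (Fin B) (Fin B) ℝ) : ‖Pmat X - 1‖ ≤ √B * √2 := by
  have hrow (i : Fin B) : ‖toLp 2 ((Pmat X - 1) i)‖ ≤ √2 := by
    have : Nonempty (Fin B) := ⟨i⟩
    have hone : (1 : Matrix (Fin B) (Fin B) ℝ) i = Pi.single i 1 :=
      funext fun _ => Matrix.one_eq_pi_single
    have hmem := single_mem_stdSimplex ℝ i
    rw [← hone] at hmem
    exact norm_sub_le_sqrt_two_of_mem_stdSimplex (softmax_mem_stdSimplex (X i)) hmem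
  simpa using frobenius_norm_le_of_row_le hrow

lemma norm_Pmat_sub_Pmat_le {a b : ℝ} {X Y : Matrix (Fin B) (Fin B) ℝ}
    (hX : ∀ i j, X i j ∈ Set.Icc a b) (hY : ∀ i j, Y i j ∈ Set.Icc a b) :
    ‖Pmat X - Pmat Y‖ ≤ Real.exp (b - a) / B * ‖X - Y‖ := by
  refine frobenius_norm_le_mul_of_row_le (by positivity) fun i => ?_
  have : Nonempty (Fin B) := ⟨i⟩
  have hrow := norm_softmax_sub_softmax_le (hX i) (hY i)
  rwa [Fintype.card_fin] at hrow

lemma Qmat_eq_transpose_Pmat_transpose (X : Matrix (Fin B) (Fin B) ℝ) : Qmat X = (Pmat Xᵀ)ᵀ :=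
  rfl

lemma norm_Qmat_sub_one_le (X : Matrix (Fin B) (Fin B) ℝ) : ‖Qmat X - 1‖ ≤ √B * √2 := by
  rw [Qmat_eq_transpose_Pmat_transpose, ← frobenius_norm_transpose, transpose_sub,
    transpose_transpose, transpose_one]
  exact norm_Pmat_sub_one_le Xᵀ

lemma norm_Qmat_sub_Qmat_le {a b : ℝ} {X Y : Matrix (Fin B) (Fin B) ℝ}
    (hX : ∀ i j, X i j ∈ Set.Icc a b) (hY : ∀ i j, Y i j ∈ Set.Icc a b) :
    ‖Qmat X - Qmat Y‖ ≤ Real.exp (b - a) / B * ‖X - Y‖ := by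
  rw [Qmat_eq_transpose_Pmat_transpose, Qmat_eq_transpose_Pmat_transpose, ← transpose_sub,
    frobenius_norm_transpose, ← frobenius_norm_transpose (X - Y), transpose_sub]
  exact norm_Pmat_sub_Pmat_le (fun i j => hX j i) fun i j => hY j i

lemma norm_gradLM_le (X : Matrix (Fin B) (Fin B) ℝ) : ‖gradLM X‖ ≤ 2 * √(2 / B) := by
  have hsplit : gradLM X = (1 / (B : ℝ)) • ((Pmat X - 1) + (Qmat X - 1)) := by
    unfold gradLM
    module
  calc ‖gradLM X‖ = 1 / B * ‖(Pmat X - 1) + (Qmat X - 1)‖ := by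
        rw [hsplit, norm_smul, Real.norm_of_nonneg (by positivity)]
    _ ≤ 1 / B * (√B * √2 + √B * √2) := by
        gcongr
        exact norm_add_le_of_le (norm_Pmat_sub_one_le X) (norm_Qmat_sub_one_le X)
    _ = 2 * √2 * (√B / B) := by ring
    _ = 2 * √(2 / B) := by rw [Real.sqrt_div_self', Real.sqrt_div zero_le_two]; ring

lemma norm_gradLM_sub_gradLM_le {a b : ℝ} {X Y : Matrix (Fin B) (Fin B) ℝ}
    (hX : ∀ i j, X i j ∈ Set.Icc a b) (hY : ∀ i j, Y i j ∈ Set.Icc a b) :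
    ‖gradLM X - gradLM Y‖ ≤ 2 * Real.exp (b - a) / B ^ 2 * ‖X - Y‖ := by
  have hsplit : gradLM X - gradLM Y
      = (1 / (B : ℝ)) • ((Pmat X - Pmat Y) + (Qmat X - Qmat Y)) := by
    unfold gradLM
    module
  calc ‖gradLM X - gradLM Y‖ = 1 / B * ‖(Pmat X - Pmat Y) + (Qmat X - Qmat Y)‖ := by
        rw [hsplit, norm_smul, Real.norm_of_nonneg (by positivity)]
    _ ≤ 1 / B * (Real.exp (b - a) / B * ‖X - Y‖ + Real.exp (b - a) / B * ‖X - Y‖) := by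
        gcongr
        exact norm_add_le_of_le (norm_Pmat_sub_Pmat_le hX hY) (norm_Qmat_sub_Qmat_le hX hY)
    _ = 2 * Real.exp (b - a) / B ^ 2 * ‖X - Y‖ := by ring

end GradLM

lemma sqrt_sq_add_sq_le_mul_sqrt {g k u v x y : ℝ} (hg : 0 ≤ g) (hk : 0 ≤ k)
    (hx : 0 ≤ x) (hy : 0 ≤ y) (hxv : x ≤ v * g + k * (u + v)) (hyu : y ≤ u * g + k * (u + v)) :
    √(x ^ 2 + y ^ 2) ≤ (g + 2 * k) * √(u ^ 2 + v ^ 2) := by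
  refine Real.sqrt_le_iff.2 ⟨by positivity, ?_⟩
  rw [mul_pow, Real.sq_sqrt (by positivity)]
  calc x ^ 2 + y ^ 2 ≤ (v * g + k * (u + v)) ^ 2 + (u * g + k * (u + v)) ^ 2 := by gcongr
    _ = (g + 2 * k) ^ 2 * (u ^ 2 + v ^ 2) - 2 * (g * k + k ^ 2) * (u - v) ^ 2 := by ring
    _ ≤ (g + 2 * k) ^ 2 * (u ^ 2 + v ^ 2) := sub_le_self _ (by positivity)

section Embeddings

variable {ι : Type*} [Fintype ι] {B : ℕ} {r : ℝ} {U₁ V₁ U₂ V₂ : Matrix ι (Fin B) ℝ}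

lemma sqrt_mul_norm_gradLM_sub_gradLM_le
    (hU₁ : ∀ j, ‖toLp 2 (U₁.col j)‖ ≤ r) (hV₁ : ∀ j, ‖toLp 2 (V₁.col j)‖ ≤ r)
    (hU₂ : ∀ j, ‖toLp 2 (U₂.col j)‖ ≤ r) (hV₂ : ∀ j, ‖toLp 2 (V₂.col j)‖ ≤ r) :
    √B * r * ‖gradLM (U₁ᵀ * V₁) - gradLM (U₂ᵀ * V₂)‖
      ≤ 2 * r ^ 2 * Real.exp (2 * r ^ 2) / B * (‖U₁ - U₂‖ + ‖V₁ - V₂‖) := by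
  have hr : 0 ≤ √B * r := by
    simpa using (norm_nonneg _).trans (frobenius_norm_le_of_col_le hU₁)
  have hgrad := norm_gradLM_sub_gradLM_le (transpose_mul_apply_mem_Icc hU₁ hV₁)
    (transpose_mul_apply_mem_Icc hU₂ hV₂)
  rw [show r ^ 2 - -r ^ 2 = 2 * r ^ 2 by ring] at hgrad
  calc √B * r * ‖gradLM (U₁ᵀ * V₁) - gradLM (U₂ᵀ * V₂)‖
      ≤ √B * r * (2 * Real.exp (2 * r ^ 2) / B ^ 2
          * (√B * r * (‖U₁ - U₂‖ + ‖V₁ - V₂‖))) := by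
        gcongr
        refine hgrad.trans ?_
        gcongr
        simpa using frobenius_norm_transpose_mul_sub_transpose_mul_le_of_col_le hV₁ hU₂
    _ = √B * √B / (B * B) * (2 * r ^ 2 * Real.exp (2 * r ^ 2))
          * (‖U₁ - U₂‖ + ‖V₁ - V₂‖) := by ring
    _ = 2 * r ^ 2 * Real.exp (2 * r ^ 2) / B * (‖U₁ - U₂‖ + ‖V₁ - V₂‖) := by
        rw [Real.mul_self_sqrt (Nat.cast_nonneg B), div_self_mul_self']
        ring

theorem miniBatch_grad_lipschitz_general
    (hU₁ : ∀ j, ‖toLp 2 (U₁.col j)‖ ≤ r) (hV₁ : ∀ j, ‖toLp 2 (V₁.col j)‖ ≤ r)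
    (hU₂ : ∀ j, ‖toLp 2 (U₂.col j)‖ ≤ r) (hV₂ : ∀ j, ‖toLp 2 (V₂.col j)‖ ≤ r) :
    √(‖V₁ * (gradLM (U₁ᵀ * V₁))ᵀ - V₂ * (gradLM (U₂ᵀ * V₂))ᵀ‖ ^ 2
        + ‖U₁ * gradLM (U₁ᵀ * V₁) - U₂ * gradLM (U₂ᵀ * V₂)‖ ^ 2)
      ≤ (2 * √(2 / B) + 4 * r ^ 2 * Real.exp (2 * r ^ 2) / B)
          * √(‖U₁ - U₂‖ ^ 2 + ‖V₁ - V₂‖ ^ 2) := by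
  have hG₁ := norm_gradLM_le (U₁ᵀ * V₁)
  have hgrad := sqrt_mul_norm_gradLM_sub_gradLM_le hU₁ hV₁ hU₂ hV₂
  have hU₂_norm : ‖U₂‖ ≤ √B * r := by simpa using frobenius_norm_le_of_col_le hU₂
  have hV₂_norm : ‖V₂‖ ≤ √B * r := by simpa using frobenius_norm_le_of_col_le hV₂
  have hUG := frobenius_norm_mul_sub_mul_le_of_le (A₁ := U₁) hU₂_norm hG₁ hgrad
  rw [← frobenius_norm_transpose] at hG₁
  rw [← frobenius_norm_transpose (gradLM _ - gradLM _), transpose_sub] at hgrad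
  have hVG := frobenius_norm_mul_sub_mul_le_of_le (A₁ := V₁) hV₂_norm hG₁ hgrad
  convert sqrt_sq_add_sq_le_mul_sqrt (by positivity) (by positivity) (norm_nonneg _)
    (norm_nonneg _) hVG hUG using 3
  ring

end Embeddings

/-- The gradient of the mini-batch contrastive loss `(U,V) ↦ L^M(UᵀV)` is
`ρ₀`-Lipschitz, `ρ₀ = 2√(2/B) + 4e²/B`, on configurations whose columns lie in the
closed unit ball. -/
theorem miniBatch_grad_lipschitz (B d : ℕ) (hB : 1 ≤ B) (hd : 1 ≤ d)
    (U₁ V₁ U₂ V₂ : Matrix (Fin d) (Fin B) ℝ)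
    (hU₁ : ∀ j, Real.sqrt (∑ i, (U₁ i j)^2) ≤ 1)
    (hV₁ : ∀ j, Real.sqrt (∑ i, (V₁ i j)^2) ≤ 1)
    (hU₂ : ∀ j, Real.sqrt (∑ i, (U₂ i j)^2) ≤ 1)
    (hV₂ : ∀ j, Real.sqrt (∑ i, (V₂ i j)^2) ≤ 1) :
    Real.sqrt
        (frobNorm (V₁ * (gradLM (U₁ᵀ * V₁))ᵀ - V₂ * (gradLM (U₂ᵀ * V₂))ᵀ)^2
          + frobNorm (U₁ * gradLM (U₁ᵀ * V₁) - U₂ * gradLM (U₂ᵀ * V₂))^2)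
      ≤ (2 * Real.sqrt (2 / (B:ℝ)) + 4 * (Real.exp 1)^2 / (B:ℝ))
          * Real.sqrt (frobNorm (U₁ - U₂)^2 + frobNorm (V₁ - V₂)^2) := by
  simp only [← norm_toLp_col] at hU₁ hV₁ hU₂ hV₂
  simpa [frobNorm_eq_norm, Real.exp_one_pow] using
    miniBatch_grad_lipschitz_general hU₁ hV₁ hU₂ hV₂
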